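/- arXiv:2602.07210 — 3 statements merged into one kernel-verified Lean document; each statement's English description precedes it below -/
import Mathlib

section
/- Let G be a simple non-commutative group and T a nonempty finite set. A subgroup H of the direct power G^T is normalized by the full diagonal subgroup Δ^T(G) = {(g)_{σ∈T} : g ∈ G} if and only if H is a product of diagonals, i.e., there exist an integer r ≥ 0 and pairwise disjoint nonempty subsets T_1, …, T_r of T such that H = ∏_{i=1}^r Δ^{T_i}(G). -/
/-!
Suppose `H` is normalized by the full diagonal. Its projection to each coordinate is then normal in
`G`, hence trivial or everything. Call `σ` active in the second case, and let the block of `σ`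
consist of the coordinates `τ` such that `h σ = h τ` for all `h ∈ H`.

If `σ` is active and every element of `H` trivial at `τ` is trivial at `σ`, then `h τ` determines
`h σ` for `h ∈ H`. Conjugating by `h` and by the constant tuple `h τ` has the same effect at `τ`,
hence at `σ`, so `(h τ)⁻¹ * h σ` is central, that is, `h σ = h τ`. Hence for every `τ` outside the
block of `σ`, the elements of `H` trivial at `τ` still project onto `G` at `σ`. Since
`⁅G, G⁆ = G`, commutators of such elements show the same for the elements of `H` trivial on the
whole complement of the block. Those elements form the partial diagonal of the block, and `H` is the
product of the partial diagonals of its active blocks.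
-/

namespace ProductOfDiagonals

open Subgroup

lemma center_eq_bot_of_exists_mul_ne {G : Type*} [Group G] [IsSimpleGroup G]
    (hnc : ∃ a b : G, a * b ≠ b * a) : center G = ⊥ := by
  obtain ⟨a, b, hab⟩ := hnc
  refine (inferInstance : (center G).Normal).eq_bot_or_eq_top.resolve_right fun htop => hab ?_
  exact mem_center_iff.1 (htop ▸ mem_top b) a

lemma commutator_ne_bot_of_center_eq_bot {G : Type*} [Group G] [Nontrivial G]
    (hZ : center G = ⊥) : commutator G ≠ ⊥ := by
  rw [Ne, commutator_eq_bot_iff_center_eq_top, hZ]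
  exact bot_ne_top

lemma mulIndicator_biUnion_mem {T M ι : Type*} [Monoid M] {S : Submonoid (T → M)}
    {Ts : ι → Set T} (hdisj : Pairwise fun i j => Disjoint (Ts i) (Ts j)) {f : T → M}
    (hf : ∀ i, (Ts i).mulIndicator f ∈ S) (A : Finset ι) :
    (⋃ i ∈ A, Ts i).mulIndicator f ∈ S := by
  classical
  induction A using Finset.induction_on with
  | empty =>
    simp only [Finset.notMem_empty, Set.iUnion_of_empty, Set.iUnion_empty, Set.mulIndicator_empty]
    exact S.one_mem
  | insert i A hi ih =>
    have hdisj_i : Disjoint (Ts i) (⋃ j ∈ A, Ts j) :=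
      Set.disjoint_iUnion₂_right.2 fun j hj => hdisj (ne_of_mem_of_not_mem hj hi).symm
    rw [Finset.set_biUnion_insert, Set.mulIndicator_union_of_disjoint hdisj_i]
    exact S.mul_mem (hf i) ih

variable {G T : Type*} [Group G] {H : Subgroup (T → G)} {σ τ : T}

variable (G) in
/-- The partial diagonal `Δ^S(G)`: the tuples that are constant on `S` and trivial off `S`. -/
noncomputable def partialDiagonal (S : Set T) : Subgroup (T → G) :=
  ((Set.mulIndicatorHom G S).comp (Pi.constMonoidHom T G)).range

lemma mem_partialDiagonal {S : Set T} {f : T → G} :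
    f ∈ partialDiagonal G S ↔ ∃ g, S.mulIndicator (fun _ => g) = f :=
  Iff.rfl

lemma mem_of_partialDiagonal_le {ι : Type*} [Finite ι] {Ts : ι → Set T}
    (hdisj : Pairwise fun i j => Disjoint (Ts i) (Ts j))
    (hle : ∀ i, partialDiagonal G (Ts i) ≤ H) {f : T → G} {c : ι → G}
    (hc : ∀ i, ∀ σ ∈ Ts i, f σ = c i) (hone : ∀ σ, (∀ i, σ ∉ Ts i) → f σ = 1) : f ∈ H := by
  have := Fintype.ofFinite ι
  have hblock (i : ι) : (Ts i).mulIndicator f ∈ H := by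
    rw [Set.mulIndicator_congr (hc i)]
    exact hle i (mem_partialDiagonal.2 ⟨c i, rfl⟩)
  have hsupport : (⋃ i ∈ Finset.univ, Ts i).mulIndicator f = f :=
    Set.mulIndicator_eq_self.2 (Function.mulSupport_subset_iff'.2 fun σ hσ =>
      hone σ (by simpa using hσ))
  exact hsupport ▸ mulIndicator_biUnion_mem (S := H.toSubmonoid) hdisj hblock Finset.univ

/-- The image of `H` in the factor `σ` of `G^T`. The coordinate `σ` is active when this is not
`⊥`. -/
def projection (H : Subgroup (T → G)) (σ : T) : Subgroup G :=
  H.map (Pi.evalMonoidHom (fun _ => G) σ)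

lemma mem_projection {g : G} : g ∈ projection H σ ↔ ∃ h ∈ H, h σ = g :=
  Iff.rfl

lemma projection_eq_bot_iff : projection H σ = ⊥ ↔ ∀ h ∈ H, h σ = 1 := by
  simp only [eq_bot_iff_forall, mem_projection, forall_exists_index, and_imp,
    forall_apply_eq_imp_iff₂]

/-- The subgroup of the elements of `H` that are trivial on `A`. -/
def vanishing (H : Subgroup (T → G)) (A : Set T) : Subgroup (T → G) :=
  H ⊓ Subgroup.pi A fun _ => ⊥

lemma mem_vanishing {A : Set T} {h : T → G} :
    h ∈ vanishing H A ↔ h ∈ H ∧ ∀ τ ∈ A, h τ = 1 := by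
  simp only [vanishing, mem_inf, mem_pi, mem_bot]

lemma vanishing_empty (H : Subgroup (T → G)) : vanishing H ∅ = H := by
  rw [vanishing, pi_empty, inf_top_eq]

lemma commutator_vanishing_le (H : Subgroup (T → G)) (A B : Set T) :
    ⁅vanishing H A, vanishing H B⁆ ≤ vanishing H (A ∪ B) := by
  refine commutator_le.2 fun h hh k hk => mem_vanishing.2 ⟨?_, ?_⟩
  · exact H.commutator_le_self (commutator_mem_commutator hh.1 hk.1)
  · rintro ρ (hρ | hρ)
    · simp [commutatorElement_def, (mem_vanishing.1 hh).2 ρ hρ]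
    · simp [commutatorElement_def, (mem_vanishing.1 hk).2 ρ hρ]

lemma commutator_le_projection_vanishing_union {A B : Set T}
    (hA : projection (vanishing H A) σ = ⊤) (hB : projection (vanishing H B) σ = ⊤) :
    commutator G ≤ projection (vanishing H (A ∪ B)) σ :=
  calc commutator G
      = ⁅projection (vanishing H A) σ, projection (vanishing H B) σ⁆ := by
        rw [hA, hB, commutator_def]
    _ = projection ⁅vanishing H A, vanishing H B⁆ σ := (map_commutator _ _ _).symm
    _ ≤ projection (vanishing H (A ∪ B)) σ := map_mono (commutator_vanishing_le H A B)

/-- The set of coordinates on which every element of `H` takes the same value as at `σ`. -/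
def block (H : Subgroup (T → G)) (σ : T) : Set T :=
  {τ | ∀ h ∈ H, h σ = h τ}

lemma mem_block_self (H : Subgroup (T → G)) (σ : T) : σ ∈ block H σ :=
  fun _ _ => rfl

lemma block_eq_of_mem (hτ : τ ∈ block H σ) : block H τ = block H σ := by
  ext ρ
  exact forall₂_congr fun h hh => by rw [hτ h hh]

/-- The blocks of the active coordinates; these are the `T_i` of the theorem. -/
def activeBlocks (H : Subgroup (T → G)) : Set (Set T) :=
  block H '' {σ | projection H σ ≠ ⊥}

lemma nonempty_of_mem_activeBlocks {B : Set T} (hB : B ∈ activeBlocks H) : B.Nonempty := by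
  obtain ⟨σ, -, rfl⟩ := hB
  exact ⟨σ, mem_block_self H σ⟩

lemma pairwiseDisjoint_activeBlocks (H : Subgroup (T → G)) :
    (activeBlocks H).PairwiseDisjoint id := by
  rintro _ ⟨σ, -, rfl⟩ _ ⟨τ, -, rfl⟩ hne
  refine Set.disjoint_left.2 fun ρ hσ hτ => hne ?_
  rw [← block_eq_of_mem hσ, ← block_eq_of_mem hτ]

lemma exists_forall_eq_of_mem_activeBlocks {B : Set T} (hB : B ∈ activeBlocks H) {h : T → G}
    (hh : h ∈ H) : ∃ g, ∀ τ ∈ B, h τ = g := by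
  obtain ⟨σ, -, rfl⟩ := hB
  exact ⟨h σ, fun τ hτ => (hτ h hh).symm⟩

lemma eq_one_of_forall_notMem_activeBlocks (hσ : ∀ B ∈ activeBlocks H, σ ∉ B) {h : T → G}
    (hh : h ∈ H) : h σ = 1 := by
  have hbot : projection H σ = ⊥ := by
    by_contra hactive
    exact hσ _ (Set.mem_image_of_mem _ hactive) (mem_block_self H σ)
  exact projection_eq_bot_iff.1 hbot h hh

/-- `H` is normalized by the full diagonal subgroup of `G^T`. -/
def DiagonalInvariant (H : Subgroup (T → G)) : Prop :=
  ∀ g : G, ∀ h ∈ H, (fun σ => g * h σ * g⁻¹) ∈ H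

namespace DiagonalInvariant

protected lemma vanishing (hH : DiagonalInvariant H) (A : Set T) :
    DiagonalInvariant (vanishing H A) :=
  fun g h hh => mem_vanishing.2
    ⟨hH g h hh.1, fun τ hτ => by simp [(mem_vanishing.1 hh).2 τ hτ]⟩

lemma normal_projection (hH : DiagonalInvariant H) (σ : T) : (projection H σ).Normal where
  conj_mem := by
    rintro _ ⟨h, hh, rfl⟩ g
    exact ⟨_, hH g h hh, rfl⟩

lemma projection_eq_top [IsSimpleGroup G] (hH : DiagonalInvariant H) (hσ : projection H σ ≠ ⊥) :
    projection H σ = ⊤ :=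
  (hH.normal_projection σ).eq_bot_or_eq_top.resolve_left hσ

lemma mem_block_of_projection_vanishing_eq_bot (hH : DiagonalInvariant H) (hZ : center G = ⊥)
    (hσ : projection H σ = ⊤) (hbot : projection (vanishing H {τ}) σ = ⊥) :
    τ ∈ block H σ := by
  intro h hh
  have hconj (k : T → G) (hk : k ∈ H) : h τ * k σ * (h τ)⁻¹ = h σ * k σ * (h σ)⁻¹ := by
    have hmem : (fun ρ => h τ * k ρ * (h τ)⁻¹) * (h * k * h⁻¹)⁻¹ ∈ H :=
      H.mul_mem (hH (h τ) k hk) (H.inv_mem (H.mul_mem (H.mul_mem hh hk) (H.inv_mem hh)))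
    exact mul_inv_eq_one.1 (projection_eq_bot_iff.1 hbot _ (mem_vanishing.2 ⟨hmem, by simp⟩))
  have hcenter : (h τ)⁻¹ * h σ ∈ center G := by
    refine mem_center_iff.2 fun g => ?_
    obtain ⟨k, hk, rfl⟩ := mem_projection.1 (hσ ▸ mem_top g)
    calc k σ * ((h τ)⁻¹ * h σ) = (h τ)⁻¹ * (h τ * k σ * (h τ)⁻¹) * h σ := by group
      _ = (h τ)⁻¹ * (h σ * k σ * (h σ)⁻¹) * h σ := by rw [hconj k hk]
      _ = (h τ)⁻¹ * h σ * k σ := by group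
  rw [hZ, mem_bot] at hcenter
  exact (inv_mul_eq_one.1 hcenter).symm

variable [IsSimpleGroup G]

lemma projection_vanishing_eq_top (hH : DiagonalInvariant H) (hZ : center G = ⊥)
    (hσ : projection H σ ≠ ⊥) {A : Set T} (hfin : A.Finite) (hA : Disjoint A (block H σ)) :
    projection (vanishing H A) σ = ⊤ := by
  induction A, hfin using Set.Finite.induction_on with
  | empty => rw [vanishing_empty, hH.projection_eq_top hσ]
  | @insert τ A _ _ ih =>
    obtain ⟨hτ, hA⟩ := Set.disjoint_insert_left.1 hA
    have hsep : projection (vanishing H {τ}) σ = ⊤ :=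
      (hH.vanishing {τ}).projection_eq_top fun hbot =>
        hτ (hH.mem_block_of_projection_vanishing_eq_bot hZ (hH.projection_eq_top hσ) hbot)
    have hcomm := commutator_le_projection_vanishing_union hsep (ih hA)
    rw [Set.insert_eq]
    exact (hH.vanishing _).projection_eq_top
      (ne_bot_of_le_ne_bot (commutator_ne_bot_of_center_eq_bot hZ) hcomm)

lemma partialDiagonal_block_le (hH : DiagonalInvariant H) (hZ : center G = ⊥)
    (hσ : projection H σ ≠ ⊥) (hfin : (block H σ)ᶜ.Finite) :
    partialDiagonal G (block H σ) ≤ H := by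
  intro f hf
  obtain ⟨g, rfl⟩ := mem_partialDiagonal.1 hf
  have htop := hH.projection_vanishing_eq_top hZ hσ hfin disjoint_compl_left
  obtain ⟨h, hh, hg⟩ := mem_projection.1 (htop ▸ mem_top g)
  obtain ⟨hhH, hone⟩ := mem_vanishing.1 hh
  have hconst : (block H σ).mulIndicator (fun _ => g) = h :=
    calc (block H σ).mulIndicator (fun _ => g)
        = (block H σ).mulIndicator h :=
          Set.mulIndicator_congr fun τ hτ => hg.symm.trans (hτ h hhH)
      _ = h := Set.mulIndicator_eq_self.2 (Function.mulSupport_subset_iff'.2 hone)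
  exact hconst.symm ▸ hhH

lemma partialDiagonal_le_of_mem_activeBlocks [Finite T] (hH : DiagonalInvariant H)
    (hZ : center G = ⊥) {B : Set T} (hB : B ∈ activeBlocks H) : partialDiagonal G B ≤ H := by
  obtain ⟨σ, hσ, rfl⟩ := hB
  exact hH.partialDiagonal_block_le hZ hσ (Set.toFinite _)

end DiagonalInvariant

end ProductOfDiagonals

open ProductOfDiagonals in
/-- Let `G` be a simple non-commutative group and `T` a nonempty finite set.
A subgroup `H` of the direct power `G^T` is normalized by the full diagonal subgroup
`Δ^T(G)` if and only if `H` is a product of diagonals, i.e. there exist pairwise disjoint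
nonempty subsets `T_1, …, T_r` of `T` such that `H = ∏_{i=1}^r Δ^{T_i}(G)`. -/
theorem product_of_diagonals {G : Type*} [Group G] [IsSimpleGroup G]
    (hnc : ∃ a b : G, a * b ≠ b * a)
    {T : Type*} [Fintype T] [Nonempty T]
    (H : Subgroup (T → G)) :
    (∀ g : G, ∀ h ∈ H, (fun σ => g * h σ * g⁻¹) ∈ H) ↔
      ∃ (r : ℕ) (Ts : Fin r → Set T),
        (∀ i, (Ts i).Nonempty) ∧
        (Pairwise fun i j => Disjoint (Ts i) (Ts j)) ∧
        (∀ f : T → G, f ∈ H ↔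
          ∃ c : Fin r → G,
            (∀ i, ∀ σ ∈ Ts i, f σ = c i) ∧
            (∀ σ, (∀ i, σ ∉ Ts i) → f σ = 1)) := by
  constructor
  · intro (hH : DiagonalInvariant H)
    have hZ := center_eq_bot_of_exists_mul_ne hnc
    obtain ⟨r, Ts, hinj, hrange⟩ := (activeBlocks H).toFinite.fin_param
    have hTs (i : Fin r) : Ts i ∈ activeBlocks H := hrange ▸ Set.mem_range_self i
    have hdisj : Pairwise fun i j => Disjoint (Ts i) (Ts j) := fun i j hij =>
      pairwiseDisjoint_activeBlocks H (hTs i) (hTs j) (hinj.ne hij)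
    refine ⟨r, Ts, fun i => nonempty_of_mem_activeBlocks (hTs i), hdisj, fun f =>
      ⟨fun hf => ?_, ?_⟩⟩
    · choose c hc using fun i => exists_forall_eq_of_mem_activeBlocks (hTs i) hf
      refine ⟨c, hc, fun σ hσ => eq_one_of_forall_notMem_activeBlocks (fun B hB => ?_) hf⟩
      obtain ⟨i, rfl⟩ := hrange.symm ▸ hB
      exact hσ i
    · rintro ⟨c, hc, hone⟩
      exact mem_of_partialDiagonal_le hdisj
        (fun i => hH.partialDiagonal_le_of_mem_activeBlocks hZ (hTs i)) hc hone
  · rintro ⟨r, Ts, -, -, hmem⟩ g h hh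
    obtain ⟨c, hc, hone⟩ := (hmem h).1 hh
    exact (hmem _).2 ⟨fun i => g * c i * g⁻¹, fun i σ hσ => by simp [hc i σ hσ],
      fun σ hσ => by simp [hone σ hσ]⟩
end

section
/- Let G = ∏_{j=1}^t G^{(j)} be a finite direct product of groups, where each G^{(j)} is simple and non-commutative, and let T be a nonempty finite set. If a subgroup H of G^T is normalized by the full diagonal subgroup Δ^T(G), then H factors through the simple factors: every element h ∈ H can be written as h = h_1 h_2 ⋯ h_t with h_j ∈ H ∩ (G^{(j)})^T for each j; equivalently, H = ∏_{j=1}^t (H ∩ (G^{(j)})^T). -/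
/-!
Fix `h ∈ H` and an index `j`, put `S = G^{(j)}`, and let `p : T → S` be the `j`-th component of
`h`. The subgroup `M = H ∩ S^T` of `S^T` is normalized by the diagonal of `S` and by `p`
(conjugation by `h` acts on `S^T` as conjugation by `p`), and it contains all commutators `[p, g]`
with `g` diagonal. Since `h` is the product of its components, it suffices to deduce `p ∈ M`.

The elements of `S^T` that are constant on the level sets of `p` form a power of `S` indexed by
the finite range of `p`, so `p` may be taken injective. If `p σ ≠ 1`, then the elements of `M`
that are trivial on a finite set `F` of other coordinates project onto `S` at `σ`. For `F = ∅`
this holds because the projection is normal in `S` and contains some `[p σ, g] ≠ 1`. To add a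
coordinate `τ` to `F`, take commutators with `q = (p τ)⁻¹ p`, which normalizes `M`, is trivial at
`τ` and, by injectivity, nontrivial at `σ`. Hence `M` contains the full coordinate subgroup at
each `σ` with `p σ ≠ 1`, and so it contains `p`.
-/

open Subgroup
open scoped commutatorElement

theorem center_eq_bot_of_exists_mul_ne {S : Type*} [Group S] [IsSimpleGroup S]
    (hS : ∃ a b : S, a * b ≠ b * a) : center S = ⊥ := by
  refine (inferInstance : (center S).Normal).eq_bot_or_eq_top.resolve_right fun htop ↦ ?_
  obtain ⟨a, b, hab⟩ := hS
  exact hab (mem_center_iff.1 (htop ▸ mem_top b) a)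

theorem exists_commutatorElement_ne_one {S : Type*} [Group S] (hS : center S = ⊥) {s : S}
    (hs : s ≠ 1) : ∃ g : S, ⁅s, g⁆ ≠ 1 := by
  by_contra! hcomm
  have hmem : s ∈ center S :=
    mem_center_iff.2 fun g ↦ (commutatorElement_eq_one_iff_mul_comm.1 (hcomm g)).symm
  exact hs (mem_bot.1 (hS ▸ hmem))

theorem commutatorElement_mem_of_mem_normalizer {A : Type*} [Group A] {K : Subgroup A} {q x : A}
    (hq : q ∈ normalizer K) (hx : x ∈ K) : ⁅q, x⁆ ∈ K :=
  mul_mem ((mem_normalizer_iff.1 hq x).1 hx) (inv_mem hx)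

section Power

variable {T S : Type*} [Group S]

variable (T S) in
/-- The full diagonal subgroup `Δ^T(S)` of the power `S^T`. -/
def diagonal : Subgroup (T → S) :=
  (Pi.constMonoidHom T S).range

theorem const_mem_diagonal (g : S) : Function.const T g ∈ diagonal T S :=
  ⟨g, rfl⟩

/-- The elements of the subgroup `M` of `S^T` that are trivial at every coordinate in `F`. -/
def trivialOn (M : Subgroup (T → S)) (F : Set T) : Subgroup (T → S) :=
  M ⊓ Subgroup.pi F fun _ ↦ ⊥

theorem mem_trivialOn {M : Subgroup (T → S)} {F : Set T} {x : T → S} :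
    x ∈ trivialOn M F ↔ x ∈ M ∧ ∀ τ ∈ F, x τ = 1 := by
  simp [trivialOn, mem_pi]

theorem diagonal_le_normalizer_trivialOn {M : Subgroup (T → S)} (hM : diagonal T S ≤ normalizer M)
    (F : Set T) : diagonal T S ≤ normalizer (trivialOn M F) := by
  rw [le_normalizer_iff] at hM ⊢
  intro d hd x hx
  rw [mem_trivialOn] at hx ⊢
  exact ⟨hM d hd x hx.1, fun τ hτ ↦ by simp [hx.2 τ hτ]⟩

theorem map_eval_normal {K : Subgroup (T → S)} (hK : diagonal T S ≤ normalizer K) (σ : T) :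
    (K.map (Pi.evalMonoidHom _ σ)).Normal := by
  constructor
  rintro _ ⟨x, hx, rfl⟩ g
  exact ⟨_, le_normalizer_iff.1 hK _ (const_mem_diagonal g) x hx, rfl⟩

theorem map_eval_eq_top [IsSimpleGroup S] {K : Subgroup (T → S)}
    (hK : diagonal T S ≤ normalizer K) {σ : T} {x : T → S} (hx : x ∈ K) (hxσ : x σ ≠ 1) :
    K.map (Pi.evalMonoidHom _ σ) = ⊤ := by
  refine (map_eval_normal hK σ).eq_bot_or_eq_top.resolve_left fun hbot ↦ hxσ ?_
  exact mem_bot.1 (hbot ▸ mem_map_of_mem (Pi.evalMonoidHom _ σ) hx)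

theorem map_eval_trivialOn_eq_top [IsSimpleGroup S] (hS : center S = ⊥) {M : Subgroup (T → S)}
    (hM : diagonal T S ≤ normalizer M) {p : T → S} (hp : p ∈ normalizer M)
    (hcomm : ∀ d ∈ diagonal T S, ⁅p, d⁆ ∈ M) {σ : T} (hσ : p σ ≠ 1) (F : Finset T)
    (hF : ∀ τ ∈ F, p τ ≠ p σ) : (trivialOn M F).map (Pi.evalMonoidHom _ σ) = ⊤ := by
  classical
  induction F using Finset.induction_on with
  | empty =>
    obtain ⟨g, hg⟩ := exists_commutatorElement_ne_one hS hσ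
    have hmem : ⁅p, Function.const T g⁆ ∈ trivialOn M ↑(∅ : Finset T) :=
      mem_trivialOn.2 ⟨hcomm _ (const_mem_diagonal g), by simp⟩
    exact map_eval_eq_top (diagonal_le_normalizer_trivialOn hM _) hmem hg
  | insert τ F _ ih =>
    rw [Finset.forall_mem_insert] at hF
    obtain ⟨hτ, hF⟩ := hF
    let q : T → S := Function.const T (p τ)⁻¹ * p
    have hq : q ∈ normalizer M := mul_mem (hM (const_mem_diagonal _)) hp
    have hqτ : q τ = 1 := inv_mul_cancel (p τ)
    have hqσ : q σ ≠ 1 := fun h ↦ hτ (inv_mul_eq_one.1 h)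
    obtain ⟨g, hg⟩ := exists_commutatorElement_ne_one hS hqσ
    obtain ⟨x, hx, rfl⟩ : g ∈ (trivialOn M F).map (Pi.evalMonoidHom _ σ) := ih hF ▸ mem_top g
    obtain ⟨hxM, hxF⟩ := mem_trivialOn.1 hx
    have hmem : ⁅q, x⁆ ∈ trivialOn M ↑(insert τ F) := by
      refine mem_trivialOn.2 ⟨commutatorElement_mem_of_mem_normalizer hq hxM, fun ρ hρ ↦ ?_⟩
      change ⁅q ρ, x ρ⁆ = 1
      rcases Finset.mem_insert.1 hρ with rfl | hρF
      · rw [hqτ, commutatorElement_one_left]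
      · rw [hxF ρ hρF, commutatorElement_one_right]
    exact map_eval_eq_top (diagonal_le_normalizer_trivialOn hM _) hmem hg

theorem mem_of_commutatorElement_mem_of_injective [IsSimpleGroup S] [Finite T]
    (hS : center S = ⊥) {M : Subgroup (T → S)} (hM : diagonal T S ≤ normalizer M) {p : T → S}
    (hp : p ∈ normalizer M) (hcomm : ∀ d ∈ diagonal T S, ⁅p, d⁆ ∈ M)
    (hinj : Function.Injective p) : p ∈ M := by
  classical
  cases nonempty_fintype T
  refine pi_mem_of_mulSingle_mem p fun σ ↦ ?_
  by_cases hσ : p σ = 1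
  · rw [hσ, Pi.mulSingle_one]
    exact one_mem M
  have htop := map_eval_trivialOn_eq_top hS hM hp hcomm hσ (Finset.univ.erase σ)
    fun τ hτ ↦ hinj.ne (Finset.ne_of_mem_erase hτ)
  obtain ⟨x, hx, hxσ⟩ : p σ ∈ (trivialOn M _).map (Pi.evalMonoidHom _ σ) := htop ▸ mem_top (p σ)
  obtain ⟨hxM, hx_ne⟩ := mem_trivialOn.1 hx
  have hx_eq : Pi.mulSingle σ (p σ) = x := by
    rw [← hxσ]
    funext τ
    by_cases hτ : τ = σ
    · subst hτ
      simp
    · rw [Pi.mulSingle_eq_of_ne hτ, hx_ne τ (by simp [hτ])]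
  exact hx_eq ▸ hxM

theorem mem_of_commutatorElement_mem [IsSimpleGroup S] (hS : center S = ⊥)
    {M : Subgroup (T → S)} (hM : diagonal T S ≤ normalizer M) {p : T → S}
    (hp : p ∈ normalizer M) (hcomm : ∀ d ∈ diagonal T S, ⁅p, d⁆ ∈ M)
    (hfin : (Set.range p).Finite) : p ∈ M := by
  have : Finite (Set.range p) := hfin
  -- The image of `φ` consists of the functions that are constant on the level sets of `p`.
  let φ : (Set.range p → S) →* (T → S) :=
    MonoidHom.pi fun σ ↦ Pi.evalMonoidHom _ (Set.rangeFactorization p σ)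
  have hφ_diagonal : diagonal (Set.range p) S ≤ (diagonal T S).comap φ := by
    rintro _ ⟨g, rfl⟩
    exact const_mem_diagonal g
  have hM_comap : diagonal (Set.range p) S ≤ normalizer (M.comap φ) :=
    hφ_diagonal.trans <| (comap_mono hM).trans <| le_normalizer_comap φ
  have hp_comap : Subtype.val ∈ M.comap φ :=
    mem_of_commutatorElement_mem_of_injective hS hM_comap (le_normalizer_comap φ hp)
      (fun d hd ↦ hcomm (φ d) (hφ_diagonal hd)) Subtype.val_injective
  exact hp_comap

end Power

section Product

variable {ι : Type*} [DecidableEq ι] {G : ι → Type*} {T : Type*}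

section Monoid

variable [∀ j, Monoid (G j)]

variable (T) in
/-- The embedding of the power `(G^{(j)})^T` of the `j`-th factor into `G^T`, where
`G = ∏ j, G^{(j)}`. -/
def factorEmbedding (j : ι) : (T → G j) →* (T → ∀ j, G j) :=
  (MonoidHom.mulSingle G j).compLeft T

theorem prod_map_mulSingle {l : List ι} (hl : l.Nodup) (hmem : ∀ j, j ∈ l)
    (x : ∀ j, G j) : (l.map fun j ↦ Pi.mulSingle j (x j)).prod = x := by
  funext j
  rw [Pi.list_prod_apply, List.map_map, List.prod_map_eq_pow_single j,
    List.count_eq_one_of_mem hl (hmem j)]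
  · simp
  · intro i hij _
    simp [Pi.mulSingle_eq_of_ne hij.symm]

theorem prod_map_factorEmbedding {l : List ι} (hl : l.Nodup) (hmem : ∀ j, j ∈ l)
    (h : T → ∀ j, G j) : (l.map fun j ↦ factorEmbedding T j fun σ ↦ h σ j).prod = h := by
  funext σ
  rw [Pi.list_prod_apply, List.map_map]
  exact prod_map_mulSingle hl hmem (h σ)

end Monoid

variable [∀ j, Group (G j)]

theorem conj_mulSingle (x : ∀ j, G j) (j : ι) (s : G j) :
    x * Pi.mulSingle j s * x⁻¹ = Pi.mulSingle j (x j * s * (x j)⁻¹) := by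
  funext i
  by_cases hi : i = j
  · subst hi
    simp
  · simp [hi]

theorem conj_factorEmbedding (h : T → ∀ j, G j) (j : ι) (x : T → G j) :
    h * factorEmbedding T j x * h⁻¹ =
      factorEmbedding T j ((fun σ ↦ h σ j) * x * (fun σ ↦ h σ j)⁻¹) :=
  funext fun σ ↦ conj_mulSingle (h σ) j (x σ)

theorem commutatorElement_factorEmbedding (h : T → ∀ j, G j) (j : ι) (x : T → G j) :
    ⁅h, factorEmbedding T j x⁆ = factorEmbedding T j ⁅fun σ ↦ h σ j, x⁆ := by
  rw [commutatorElement_def, conj_factorEmbedding, ← map_inv, ← map_mul, commutatorElement_def]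

theorem subgroup_factors_through_simple_factors_general {H : Subgroup (T → ∀ j, G j)} {j : ι}
    [IsSimpleGroup (G j)] (hnc : ∃ a b : G j, a * b ≠ b * a)
    (hH : (diagonal T (G j)).map (factorEmbedding T j) ≤ normalizer H)
    {h : T → ∀ j, G j} (hh : h ∈ H) (hfin : (Set.range fun σ ↦ h σ j).Finite) :
    factorEmbedding T j (fun σ ↦ h σ j) ∈ H := by
  have hM : diagonal T (G j) ≤ normalizer (H.comap (factorEmbedding T j)) :=
    (map_le_iff_le_comap.1 hH).trans (le_normalizer_comap _)
  have hp : (fun σ ↦ h σ j) ∈ normalizer (H.comap (factorEmbedding T j)) := by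
    rw [mem_normalizer_iff]
    intro x
    rw [mem_comap, mem_comap, ← conj_factorEmbedding]
    exact mem_normalizer_iff.1 (le_normalizer hh) _
  refine mem_of_commutatorElement_mem (M := H.comap _) (center_eq_bot_of_exists_mul_ne hnc) hM hp
    (fun d hd ↦ ?_) hfin
  rw [mem_comap, ← commutatorElement_factorEmbedding, ← commutatorElement_inv]
  exact inv_mem (commutatorElement_mem_of_mem_normalizer (hH (mem_map_of_mem _ hd)) hh)

end Product

/-- Let `G = ∏_{j=1}^t G^{(j)}` be a finite direct product of simple
non-commutative groups and `T` a nonempty finite set.  If a subgroup `H` of `G^T` is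
normalized by the full diagonal subgroup `Δ^T(G)`, then every `h ∈ H` can be written as
`h = h_1 h_2 ⋯ h_t` with `h_j ∈ H ∩ (G^{(j)})^T` for each `j`; here `(G^{(j)})^T` consists
of the tuples that are trivial in all factors other than the `j`-th one. -/
theorem subgroup_factors_through_simple_factors {t : ℕ} {Gj : Fin t → Type*}
    [∀ j, Group (Gj j)] [∀ j, IsSimpleGroup (Gj j)]
    (hnc : ∀ j, ∃ a b : Gj j, a * b ≠ b * a)
    {T : Type*} [Fintype T] [Nonempty T]
    (H : Subgroup (T → ∀ j, Gj j))
    (hH : ∀ g : ∀ j, Gj j, ∀ h ∈ H, (fun σ j => g j * h σ j * (g j)⁻¹) ∈ H) :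
    ∀ h ∈ H, ∃ hs : Fin t → (T → ∀ j, Gj j),
      (∀ j, hs j ∈ H) ∧
      (∀ j, ∀ σ : T, ∀ j' : Fin t, j' ≠ j → hs j σ j' = 1) ∧
      h = ((List.finRange t).map hs).prod := by
  intro h hh
  have hΔ (j : Fin t) : (diagonal T (Gj j)).map (factorEmbedding T j) ≤ normalizer H := by
    rw [le_normalizer_iff]
    rintro _ ⟨_, ⟨g, rfl⟩, rfl⟩
    exact hH (Pi.mulSingle j g)
  exact ⟨fun j ↦ factorEmbedding T j fun σ ↦ h σ j,
    fun j ↦ subgroup_factors_through_simple_factors_general (hnc j) (hΔ j) hh (Set.toFinite _),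
    fun _ _ _ hj ↦ Pi.mulSingle_eq_of_ne hj _,
    (prod_map_factorEmbedding (List.nodup_finRange t) List.mem_finRange h).symm⟩
end

section
/- Let q be an odd prime, let u ∈ ℤ_q^× be a unit that is not a square in ℤ_q, and let e ≥ 1 be an integer. For integers b with 1 ≤ b ≤ q^e define M_b = [[1, b·u], [b, 1]], and for integers a with 1 ≤ a ≤ q^{e−1} define N_a = [[q·a·u, u], [1, q·a·u]] (entries viewed in ℤ_q). Then: (i) every M_b and every N_a lies in GL₂(ℤ_q); and (ii) for any two distinct matrices g ≠ g' from the family {M_b : 1 ≤ b ≤ q^e} ∪ {N_a : 1 ≤ a ≤ q^{e−1}}, the right cosets g·diag(q^e,1)·GL₂(ℤ_q) and g'·diag(q^e,1)·GL₂(ℤ_q) in GL₂(ℚ_q) are distinct. In particular this family produces q^{e−1}(q+1) pairwise distinct right GL₂(ℤ_q)-cosets inside the double coset GL₂(ℤ_q)·diag(q^e,1)·GL₂(ℤ_q). -/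
/-!
Multiplication by `x + y√u` on `ℤ_q[√u]` has matrix `[[x, yu], [y, x]]` in the basis `1, √u`, with
determinant `x² - uy²`. Both `M_b` and `N_a` have this shape, with `(x, y) = (1, b)` and
`(x, y) = (qau, 1)`. By Hensel's lemma a unit that is not a square is not a square modulo `q`
either, so `x² - uy²` is a unit as soon as `x` or `y` is one.

The coset `M · diag(q^e, 1) · GL₂(ℤ_q)` determines the second column of `M` up to units modulo
`q^e`, so here it determines `(x : y)` as a point of the projective line over `ℤ/q^e`. The points
`(1 : b)` and `(qau : 1)` differ already modulo `q`, two points `(1 : b)` coincide only if the `b`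
agree modulo `q^e`, and two points `(qau : 1)` only if the `a` agree modulo `q^(e-1)`.
-/

/-- `A` belongs to `GL₂(ℤ_q)`: all entries of `A` lie in `ℤ_q` (i.e. have norm `≤ 1`) and
its determinant is a unit of `ℤ_q` (i.e. has norm `1`). -/
def GL2Zq (q : ℕ) [Fact q.Prime] (A : Matrix (Fin 2) (Fin 2) ℚ_[q]) : Prop :=
  (∀ i j, ‖A i j‖ ≤ 1) ∧ ‖A.det‖ = 1

/-- The diagonal matrix `diag(q^e, 1)`. -/
noncomputable def Dmat (q : ℕ) [Fact q.Prime] (e : ℕ) : Matrix (Fin 2) (Fin 2) ℚ_[q] :=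
  !![(q : ℚ_[q]) ^ e, 0; 0, 1]

/-- The family consisting of the matrices `M_b = [[1, b·u], [b, 1]]` for `1 ≤ b ≤ q^e`
and `N_a = [[q·a·u, u], [1, q·a·u]]` for `1 ≤ a ≤ q^(e-1)`. -/
noncomputable def MatFamily (q : ℕ) [Fact q.Prime] (u : ℤ_[q]) (e : ℕ) :
    Set (Matrix (Fin 2) (Fin 2) ℚ_[q]) :=
  {M | (∃ b : ℕ, 1 ≤ b ∧ b ≤ q ^ e ∧
          M = !![1, (b : ℚ_[q]) * (u : ℚ_[q]); (b : ℚ_[q]), 1]) ∨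
       (∃ a : ℕ, 1 ≤ a ∧ a ≤ q ^ (e - 1) ∧
          M = !![(q : ℚ_[q]) * (a : ℚ_[q]) * (u : ℚ_[q]), (u : ℚ_[q]);
                 1, (q : ℚ_[q]) * (a : ℚ_[q]) * (u : ℚ_[q])])}

open IsLocalRing Polynomial

section CommRing

variable {R : Type*} [CommRing R]

/-- The matrix of multiplication by `x + y√u` on `R[√u]` in the basis `1, √u`. -/
def sqrtMulMatrix (u x y : R) : Matrix (Fin 2) (Fin 2) R :=
  !![x, y * u; y, x]

lemma det_sqrtMulMatrix (u x y : R) : (sqrtMulMatrix u x y).det = x ^ 2 - u * y ^ 2 := by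
  rw [sqrtMulMatrix, Matrix.det_fin_two_of]
  ring

lemma isSquare_of_sq_sub_mem {I : Ideal R} [HenselianRing R I] (h2 : IsUnit (2 : R)) {u a : R}
    (hu : IsUnit u) (ha : a ^ 2 - u ∈ I) : IsSquare u := by
  have ha_unit : IsUnit (Ideal.Quotient.mk I a) := by
    rw [← isUnit_pow_iff two_ne_zero, ← map_pow, Ideal.Quotient.eq.mpr ha]
    exact hu.map _
  obtain ⟨z, hz, -⟩ := HenselianRing.is_henselian (I := I) (X ^ 2 - C u)
    (monic_X_pow_sub_C u two_ne_zero) a (by simpa using ha)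
    (by simpa [one_add_one_eq_two] using (h2.map (Ideal.Quotient.mk I)).mul ha_unit)
  rw [isSquare_iff_exists_sq]
  exact ⟨z, (sub_eq_zero.mp (by simpa using hz)).symm⟩

lemma isUnit_sq_sub_mul_sq [IsLocalRing R] [HenselianRing R (maximalIdeal R)]
    (h2 : IsUnit (2 : R)) {u x y : R} (hu : IsUnit u) (hsq : ¬IsSquare u)
    (hxy : IsUnit x ∨ IsUnit y) : IsUnit (x ^ 2 - u * y ^ 2) := by
  by_contra hnorm
  replace hnorm : x ^ 2 - u * y ^ 2 ∈ maximalIdeal R := hnorm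
  have hy : IsUnit y := by
    by_contra hy
    have hx : IsUnit x := hxy.resolve_right hy
    have hy_mem : u * y ^ 2 ∈ maximalIdeal R :=
      Ideal.mul_mem_left _ u (Ideal.pow_mem_of_mem _ hy 2 two_pos)
    exact notMem_maximalIdeal.mpr (hx.pow 2) ((Submodule.sub_mem_iff_left _ hy_mem).mp hnorm)
  obtain ⟨y, rfl⟩ := hy
  refine hsq (isSquare_of_sq_sub_mem (I := maximalIdeal R) (a := x * ↑y⁻¹) h2 hu ?_)
  have hdiv : (x * ↑y⁻¹) ^ 2 - u = (↑y⁻¹ : R) ^ 2 * (x ^ 2 - u * y ^ 2) := by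
    linear_combination u * (y⁻¹.val * y.val + 1) * y.inv_mul
  rw [hdiv]
  exact Ideal.mul_mem_left _ _ hnorm

end CommRing

section Padic

variable {q : ℕ} [Fact q.Prime]

lemma isUnit_two_padicInt (hq : Odd q) : IsUnit (2 : ℤ_[q]) := by
  rw [PadicInt.isUnit_iff]
  exact_mod_cast PadicInt.norm_natCast_eq_one_iff.mpr hq.coprime_two_right

lemma eq_of_pow_dvd_natCast_sub {n b c : ℕ} (hb : b ∈ Finset.Icc 1 (q ^ n))
    (hc : c ∈ Finset.Icc 1 (q ^ n)) (h : (q : ℤ_[q]) ^ n ∣ b - c) : b = c := by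
  rw [Finset.mem_Icc] at hb hc
  have hdvd : ((q ^ n : ℕ) : ℤ) ∣ (b : ℤ) - c := by
    rw [Nat.cast_pow, ← PadicInt.pow_p_dvd_int_iff]
    exact_mod_cast h
  have := Int.eq_zero_of_abs_lt_dvd hdvd (abs_lt.mpr (by omega))
  omega

lemma GL2Zq_map_algebraMap {A : Matrix (Fin 2) (Fin 2) ℤ_[q]} (hA : IsUnit A.det) :
    GL2Zq q (A.map (algebraMap ℤ_[q] ℚ_[q])) := by
  refine ⟨fun i j => (A i j).norm_le_one, ?_⟩
  rw [← RingHom.mapMatrix_apply, ← RingHom.map_det]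
  exact PadicInt.isUnit_iff.mp hA

lemma GL2Zq_one : GL2Zq q 1 := by
  rw [← map_one (algebraMap ℤ_[q] ℚ_[q]).mapMatrix]
  exact GL2Zq_map_algebraMap (by rw [Matrix.det_one]; exact isUnit_one)

/-- The coset `M · diag(q^e, 1) · GL₂(ℤ_q)`. -/
def diagCoset (q : ℕ) [Fact q.Prime] (e : ℕ) (M : Matrix (Fin 2) (Fin 2) ℚ_[q]) :
    Set (Matrix (Fin 2) (Fin 2) ℚ_[q]) :=
  {X | ∃ k, GL2Zq q k ∧ X = M * Dmat q e * k}

lemma mul_Dmat_mem_diagCoset (e : ℕ) (M : Matrix (Fin 2) (Fin 2) ℚ_[q]) :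
    M * Dmat q e ∈ diagCoset q e M :=
  ⟨1, GL2Zq_one, (mul_one _).symm⟩

lemma pow_dvd_of_diagCoset_eq {e : ℕ} {A B : Matrix (Fin 2) (Fin 2) ℤ_[q]}
    (h : diagCoset q e (A.map (algebraMap ℤ_[q] ℚ_[q])) =
      diagCoset q e (B.map (algebraMap ℤ_[q] ℚ_[q]))) :
    (q : ℤ_[q]) ^ e ∣ A 0 1 * B 1 1 - A 1 1 * B 0 1 := by
  obtain ⟨k, hk, hAB⟩ := h ▸ mul_Dmat_mem_diagCoset e (A.map (algebraMap ℤ_[q] ℚ_[q]))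
  have column (i : Fin 2) : (A i 1 : ℚ_[q]) = B i 0 * q ^ e * k 0 1 + B i 1 * k 1 1 := by
    simpa [Dmat, Matrix.mul_apply, Fin.sum_univ_two] using congrFun (congrFun hAB i) 1
  obtain ⟨c, hc⟩ : ∃ c : ℤ_[q], k 0 1 = c := ⟨⟨k 0 1, hk.1 0 1⟩, rfl⟩
  refine ⟨c * B.det, PadicInt.ext ?_⟩
  rw [Matrix.det_fin_two]
  push_cast
  rw [column 0, column 1, hc]
  ring

lemma pow_dvd_of_diagCoset_sqrtMulMatrix_eq {e : ℕ} {u x y x' y' : ℤ_[q]} (hu : IsUnit u)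
    (h : diagCoset q e ((sqrtMulMatrix u x y).map (algebraMap ℤ_[q] ℚ_[q])) =
      diagCoset q e ((sqrtMulMatrix u x' y').map (algebraMap ℤ_[q] ℚ_[q]))) :
    (q : ℤ_[q]) ^ e ∣ y * x' - x * y' := by
  have hdvd : (q : ℤ_[q]) ^ e ∣ y * u * x' - x * (y' * u) := pow_dvd_of_diagCoset_eq h
  rwa [show y * u * x' - x * (y' * u) = u * (y * x' - x * y') by ring, hu.dvd_mul_left] at hdvd

/-- The members of the family by index: `inl b` stands for `M_b` and `inr a` for `N_a`. -/
noncomputable def familyMatrix (u : ℤ_[q]) : ℕ ⊕ ℕ → Matrix (Fin 2) (Fin 2) ℤ_[q]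
  | .inl b => sqrtMulMatrix u 1 b
  | .inr a => sqrtMulMatrix u (q * a * u) 1

/-- The indices allowed in the family: `1 ≤ b ≤ q^e` for `M_b` and `1 ≤ a ≤ q^(e-1)` for `N_a`. -/
def familyIndex (q e : ℕ) : Finset (ℕ ⊕ ℕ) :=
  (Finset.Icc 1 (q ^ e)).disjSum (Finset.Icc 1 (q ^ (e - 1)))

lemma card_familyIndex (q : ℕ) {e : ℕ} (he : 1 ≤ e) :
    (familyIndex q e).card = q ^ (e - 1) * (q + 1) := by
  rw [familyIndex, Finset.card_disjSum, Nat.card_Icc, Nat.card_Icc, Nat.add_sub_cancel,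
    Nat.add_sub_cancel, mul_add_one, pow_sub_one_mul (by omega)]

lemma matFamily_eq_image (u : ℤ_[q]) (e : ℕ) :
    MatFamily q u e = (fun i => (familyMatrix u i).map (algebraMap ℤ_[q] ℚ_[q])) ''
      (familyIndex q e : Set (ℕ ⊕ ℕ)) := by
  ext M
  simp [MatFamily, familyIndex, familyMatrix, sqrtMulMatrix, ← Matrix.ext_iff, Fin.forall_fin_two,
    and_assoc, eq_comm]

lemma isUnit_det_familyMatrix (hq : Odd q) {u : ℤ_[q]} (hu : IsUnit u) (hsq : ¬IsSquare u)
    (i : ℕ ⊕ ℕ) : IsUnit (familyMatrix u i).det := by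
  rcases i with b | a <;> rw [familyMatrix, det_sqrtMulMatrix] <;>
    exact isUnit_sq_sub_mul_sq (isUnit_two_padicInt hq) hu hsq (by simp)

lemma GL2Zq_of_mem_matFamily (hq : Odd q) {u : ℤ_[q]} (hu : IsUnit u) (hsq : ¬IsSquare u) {e : ℕ}
    {M : Matrix (Fin 2) (Fin 2) ℚ_[q]} (hM : M ∈ MatFamily q u e) : GL2Zq q M := by
  rw [matFamily_eq_image] at hM
  obtain ⟨i, -, rfl⟩ := hM
  exact GL2Zq_map_algebraMap (isUnit_det_familyMatrix hq hu hsq i)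

lemma not_pow_dvd_one_sub_mul {e : ℕ} (he : 1 ≤ e) (x : ℤ_[q]) :
    ¬(q : ℤ_[q]) ^ e ∣ 1 - q * x := by
  intro h
  have h1 : (q : ℤ_[q]) ∣ 1 :=
    (dvd_sub_left (dvd_mul_right _ x)).mp ((dvd_pow_self _ (by omega)).trans h)
  exact PadicInt.prime_p.not_dvd_one h1

lemma injOn_diagCoset_familyMatrix {u : ℤ_[q]} (hu : IsUnit u) {e : ℕ} (he : 1 ≤ e) :
    Set.InjOn (fun i => diagCoset q e ((familyMatrix u i).map (algebraMap ℤ_[q] ℚ_[q])))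
      (familyIndex q e : Set (ℕ ⊕ ℕ)) := by
  intro i hi j hj hij
  rcases i with b | a <;> rcases j with b' | a' <;>
    simp only [familyIndex, Finset.mem_coe, Finset.inl_mem_disjSum, Finset.inr_mem_disjSum]
      at hi hj <;>
    have hdvd := pow_dvd_of_diagCoset_sqrtMulMatrix_eq hu hij
  · rw [mul_one, one_mul] at hdvd
    rw [eq_of_pow_dvd_natCast_sub hi hj hdvd]
  · have hcross : b * (q * a' * u) - 1 * 1 = -(1 - q * (b * a' * u)) := by ring
    rw [hcross, dvd_neg] at hdvd
    exact absurd hdvd (not_pow_dvd_one_sub_mul he _)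
  · have hcross : 1 * 1 - q * a * u * b' = 1 - q * (a * b' * u) := by ring
    rw [hcross] at hdvd
    exact absurd hdvd (not_pow_dvd_one_sub_mul he _)
  · have hcross : 1 * (q * a' * u) - q * a * u * 1 = q * ((a' - a) * u) := by ring
    obtain ⟨n, rfl⟩ := Nat.exists_eq_add_of_le' he
    rw [hcross, pow_succ', mul_dvd_mul_iff_left PadicInt.prime_p.ne_zero, hu.dvd_mul_right] at hdvd
    rw [eq_of_pow_dvd_natCast_sub hj hi hdvd]

lemma injOn_diagCoset_matFamily {u : ℤ_[q]} (hu : IsUnit u) {e : ℕ} (he : 1 ≤ e) :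
    Set.InjOn (diagCoset q e) (MatFamily q u e) := by
  rw [matFamily_eq_image]
  exact Set.InjOn.image_of_comp (g := diagCoset q e) (injOn_diagCoset_familyMatrix hu he)

lemma ncard_matFamily {u : ℤ_[q]} (hu : IsUnit u) {e : ℕ} (he : 1 ≤ e) :
    (MatFamily q u e).ncard = q ^ (e - 1) * (q + 1) := by
  have hinj : Set.InjOn (fun i => (familyMatrix u i).map (algebraMap ℤ_[q] ℚ_[q]))
      (familyIndex q e) :=
    Set.InjOn.of_comp (g := diagCoset q e) (injOn_diagCoset_familyMatrix hu he)
  rw [matFamily_eq_image, hinj.ncard_image, Set.ncard_coe_finset, card_familyIndex q he]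

end Padic

/-- Let `q` be an odd prime, `u ∈ ℤ_q^×` a non-square unit, `e ≥ 1`.
Then (i) every matrix of the family lies in `GL₂(ℤ_q)`; (ii) distinct matrices `g ≠ g'`
of the family give distinct right cosets `g·diag(q^e,1)·GL₂(ℤ_q)` and
`g'·diag(q^e,1)·GL₂(ℤ_q)`; these cosets lie inside the double coset
`GL₂(ℤ_q)·diag(q^e,1)·GL₂(ℤ_q)`, and the family produces exactly `q^(e-1)(q+1)` pairwise
distinct right `GL₂(ℤ_q)`-cosets. -/
theorem family_gives_distinct_cosets (q : ℕ) [Fact q.Prime] (hq : Odd q)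
    (u : ℤ_[q]) (hu : IsUnit u) (hsq : ¬ ∃ v : ℤ_[q], u = v ^ 2)
    (e : ℕ) (he : 1 ≤ e) :
    (∀ M ∈ MatFamily q u e, GL2Zq q M) ∧
    (∀ M ∈ MatFamily q u e, ∀ M' ∈ MatFamily q u e, M ≠ M' →
      {X | ∃ k, GL2Zq q k ∧ X = M * Dmat q e * k} ≠
        {X | ∃ k, GL2Zq q k ∧ X = M' * Dmat q e * k}) ∧
    (∀ M ∈ MatFamily q u e, ∀ k, GL2Zq q k →
      ∃ U V, GL2Zq q U ∧ GL2Zq q V ∧ M * Dmat q e * k = U * Dmat q e * V) ∧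
    Set.ncard {C : Set (Matrix (Fin 2) (Fin 2) ℚ_[q]) |
        ∃ M ∈ MatFamily q u e, C = {X | ∃ k, GL2Zq q k ∧ X = M * Dmat q e * k}} =
      q ^ (e - 1) * (q + 1) := by
  rw [← isSquare_iff_exists_sq] at hsq
  have hGL := fun M hM => GL2Zq_of_mem_matFamily (e := e) (M := M) hq hu hsq hM
  have hinj := injOn_diagCoset_matFamily hu he
  refine ⟨hGL, fun M hM M' hM' hne => hinj.ne hM hM' hne,
    fun M hM k hk => ⟨M, k, hGL M hM, hk, rfl⟩, ?_⟩
  calc _ = (diagCoset q e '' MatFamily q u e).ncard := by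
        congr 1
        ext C
        exact exists_congr fun M => and_congr_right fun _ => eq_comm
    _ = (MatFamily q u e).ncard := hinj.ncard_image
    _ = q ^ (e - 1) * (q + 1) := ncard_matFamily hu he
end
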